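/- Let A ∈ ℝ^{m×n} with rank A ≤ n−1. Then the infimum defining the solution relative magnitude of A is attained: there exists a nonzero x ∈ N(A) with ω(x) = ω(A), that is, ω(A) = min{ω(x) : x ∈ N(A), x ≠ 0}. Moreover ω(A) ≥ 1. -/

import Mathlib

/-- The relative magnitude of a nonzero vector: `max {|x j| / |x i| : x i ≠ 0}`. -/
noncomputable def omegaVec {n : ℕ} (x : Fin n → ℝ) : ℝ :=
  sSup {r : ℝ | ∃ i j : Fin n, x i ≠ 0 ∧ r = |x j| / |x i|}

/-- The solution relative magnitude of a matrix: `inf {ω x : x ∈ N(A), x ≠ 0}`,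
with the convention that it is `0` when the null space is trivial
(in Lean, `sInf ∅ = 0` for real numbers). -/
noncomputable def omegaMat {m n : ℕ} (A : Matrix (Fin m) (Fin n) ℝ) : ℝ :=
  sInf {r : ℝ | ∃ x : Fin n → ℝ, x ≠ 0 ∧ A.mulVec x = 0 ∧ r = omegaVec x}

/-- `‖A‖∞`: the maximum row ℓ1 norm of an integer matrix, as a natural number. -/
def normInf {m n : ℕ} (A : Matrix (Fin m) (Fin n) ℤ) : ℕ :=
  Finset.univ.sup fun i => ∑ j, (A i j).natAbs

theorem omega_aux_mem {n : ℕ} (x : Fin n → ℝ) (i j : Fin n) (hi : x i ≠ 0) :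
    |x j| ≤ omegaVec x * |x i| := by
  have hb : BddAbove {r : ℝ | ∃ i j : Fin n, x i ≠ 0 ∧ r = |x j| / |x i|} := by
    apply Set.Finite.bddAbove
    apply (Set.finite_range (fun p : Fin n × Fin n => |x p.2| / |x p.1|)).subset
    rintro r ⟨i, j, _, rfl⟩
    exact ⟨(i, j), rfl⟩
  have h : |x j| / |x i| ≤ omegaVec x := le_csSup hb ⟨i, j, hi, rfl⟩
  rwa [div_le_iff₀ (abs_pos.mpr hi)] at h

theorem omega_aux_le {n : ℕ} (x : Fin n → ℝ) (hx : x ≠ 0) (c : ℝ)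
    (h : ∀ i j, x i ≠ 0 → |x j| ≤ c * |x i|) : omegaVec x ≤ c := by
  obtain ⟨i, hi⟩ := Function.ne_iff.mp hx
  refine csSup_le ⟨_, i, i, hi, rfl⟩ ?_
  rintro r ⟨i, j, hi, rfl⟩
  rw [div_le_iff₀ (abs_pos.mpr hi)]
  exact h i j hi

theorem omega_aux_one {n : ℕ} (x : Fin n → ℝ) (hx : x ≠ 0) : 1 ≤ omegaVec x := by
  obtain ⟨i, hi⟩ := Function.ne_iff.mp hx
  have h := omega_aux_mem x i i hi
  have : 0 < |x i| := abs_pos.mpr hi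
  by_contra! hc
  nlinarith

theorem omega_aux_min {m n : ℕ} (A : Matrix (Fin m) (Fin n) ℝ) (x0 : Fin n → ℝ)
    (h0 : x0 ≠ 0) (hA0 : A.mulVec x0 = 0) :
    ∃ x : Fin n → ℝ, x ≠ 0 ∧ A.mulVec x = 0 ∧
      ∀ y : Fin n → ℝ, y ≠ 0 → A.mulVec y = 0 → omegaVec x ≤ omegaVec y := by
  let T : Set (ℝ × (Fin n → ℝ)) := {p | p ∈ Set.Icc 0 (omegaVec x0) ×ˢ Metric.sphere 0 1 ∧
    A.mulVec p.2 = 0 ∧ ∀ i, p.2 i = 0 ∨ 1 ≤ p.1 * |p.2 i|}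
  have hT : IsCompact T := by
    refine (isCompact_Icc.prod (isCompact_sphere 0 1)).inter_right ?_
    refine IsClosed.inter (isClosed_eq (by fun_prop) continuous_const) ?_
    change IsClosed {p : ℝ × (Fin n → ℝ) | ∀ i, p.2 i = 0 ∨ 1 ≤ p.1 * |p.2 i|}
    simp only [Set.ofPred_forall]
    refine isClosed_iInter fun i => ?_
    have h1 : IsClosed {p : ℝ × (Fin n → ℝ) | p.2 i = 0} :=
      isClosed_eq (by fun_prop) continuous_const
    have h2 : IsClosed {p : ℝ × (Fin n → ℝ) | 1 ≤ p.1 * |p.2 i|} :=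
      isClosed_le continuous_const (by fun_prop)
    exact h1.union h2
  have key : ∀ y : Fin n → ℝ, y ≠ 0 → A.mulVec y = 0 → omegaVec y ≤ omegaVec x0 →
      (omegaVec y, ‖y‖⁻¹ • y) ∈ T := by
    intro y hy hAy hle
    have hpos : 0 < ‖y‖ := norm_pos_iff.mpr hy
    have h1 := omega_aux_one y hy
    refine ⟨⟨⟨by linarith, hle⟩, ?_⟩, ?_, ?_⟩
    · simp [norm_smul, hpos.ne']
    · simp [Matrix.mulVec_smul, hAy]
    · intro i
      by_cases hi : y i = 0
      · left; simp [hi]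
      · right
        have : ‖y‖ ≤ omegaVec y * |y i| := by
          refine (pi_norm_le_iff_of_nonneg (by positivity)).mpr fun j => ?_
          exact omega_aux_mem y i j hi
        simp only [Pi.smul_apply, smul_eq_mul, abs_mul, abs_inv, abs_norm]
        rw [mul_left_comm, inv_mul_eq_div, le_div_iff₀ hpos]
        linarith
  obtain ⟨⟨c, x⟩, ⟨⟨hc, hx1⟩, hAx, hx⟩, hmin⟩ :=
    hT.exists_isMinOn ⟨_, key x0 h0 hA0 le_rfl⟩ (continuous_fst.continuousOn)
  simp only [mem_sphere_zero_iff_norm] at hx1 hAx hx hc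
  have hxne : x ≠ 0 := by
    rintro rfl
    simp at hx1
  have hxc : omegaVec x ≤ c := by
    refine omega_aux_le x hxne c fun i j hi => ?_
    have h2 : |x j| ≤ ‖x‖ := norm_le_pi_norm x j
    have := (hx i).resolve_left hi
    linarith
  refine ⟨x, hxne, hAx, fun y hy hAy => ?_⟩
  rcases le_total (omegaVec y) (omegaVec x0) with h | h
  · exact hxc.trans (hmin (key y hy hAy h))
  · exact hxc.trans (hc.2.trans h)

theorem stmt5 {m n : ℕ} (A : Matrix (Fin m) (Fin n) ℝ) (hrank : A.rank < n) :
    (∃ x : Fin n → ℝ, x ≠ 0 ∧ A.mulVec x = 0 ∧ omegaVec x = omegaMat A) ∧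
    1 ≤ omegaMat A := by
  have hex : ∃ x0 : Fin n → ℝ, x0 ≠ 0 ∧ A.mulVec x0 = 0 := by
    by_contra! hcon
    have hinj : Function.Injective A.mulVecLin := by
      rw [injective_iff_map_eq_zero]
      intro a ha
      by_contra hne
      exact hcon a hne (by simpa using ha)
    have := LinearMap.finrank_range_of_inj hinj
    rw [Matrix.rank, this] at hrank
    simp at hrank
  obtain ⟨x0, h0, hA0⟩ := hex
  obtain ⟨x, hx, hAx, hmin⟩ := omega_aux_min A x0 h0 hA0
  have heq : omegaVec x = omegaMat A := by
    have hl : IsLeast {r : ℝ | ∃ x : Fin n → ℝ, x ≠ 0 ∧ A.mulVec x = 0 ∧ r = omegaVec x}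
        (omegaVec x) := by
      refine ⟨⟨x, hx, hAx, rfl⟩, ?_⟩
      rintro r ⟨y, hy, hAy, rfl⟩
      exact hmin y hy hAy
    exact hl.csInf_eq.symm
  exact ⟨⟨x, hx, hAx, heq⟩, heq ▸ omega_aux_one x hx⟩
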